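/- In the braid group B_n (n ≥ 3), the square of the Garside element Δ, i.e. Δ² = (σ₁σ₂⋯σ_{n-1})ⁿ, generates the center of B_n. -/

import Mathlib

/-- The braid relations on `n` strands, as elements of the free group on the
standard generators `σ₁, …, σ_{n-1}` (indexed by `Fin (n-1)`). -/
def braidRels (n : ℕ) : Set (FreeGroup (Fin (n - 1))) :=
  {r | (∃ i j : Fin (n - 1), (i : ℕ) + 1 < (j : ℕ) ∧
          r = FreeGroup.of i * FreeGroup.of j * (FreeGroup.of i)⁻¹ * (FreeGroup.of j)⁻¹) ∨
       (∃ i j : Fin (n - 1), (i : ℕ) + 1 = (j : ℕ) ∧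
          r = FreeGroup.of i * FreeGroup.of j * FreeGroup.of i *
              (FreeGroup.of j * FreeGroup.of i * FreeGroup.of j)⁻¹)}

/-- The Artin braid group on `n` strands. -/
def BraidGroup (n : ℕ) := PresentedGroup (braidRels n)

instance (n : ℕ) : Group (BraidGroup n) := by unfold BraidGroup; infer_instance

/-- The standard Artin generator `σ_{i+1}` (0-indexed by `i : Fin (n-1)`). -/
def σ {n : ℕ} (i : Fin (n - 1)) : BraidGroup n := PresentedGroup.of i

/-- The Garside half-twist `Δ = (σ₁)(σ₂σ₁)⋯(σ_{n-1}⋯σ₁)`. -/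
def halfTwist (n : ℕ) : BraidGroup n :=
  ((List.finRange (n - 1)).map (fun k =>
    ((((List.finRange (n - 1)).filter (· ≤ k)).reverse).map σ).prod)).prod

set_option linter.unusedTactic false
set_option linter.unreachableTactic false
namespace BraidAux

/-- Garside's relation between two factorizations. -/
def R {α M : Type*} [Monoid M] (g : α → M) (adj : α → α → Prop) (c : α) (W : M) (d : α) (W' : M) :
    Prop :=
  (c = d ∧ W = W') ∨ (c ≠ d ∧ ¬ adj c d ∧ ∃ Z, W = g d * Z ∧ W' = g c * Z) ∨
  (adj c d ∧ ∃ Z, W = g d * (g c * Z) ∧ W' = g c * (g d * Z))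

section
variable {α M : Type*} [Monoid M] {g : α → M} {adj : α → α → Prop}

theorem R.refl' (c : α) (W : M) : R g adj c W c W := Or.inl ⟨rfl, rfl⟩

theorem R.symm' (hs : ∀ a b, adj a b → adj b a) {c d : α} {W W' : M}
    (h : R g adj c W d W') : R g adj d W' c W := by
  rcases h with ⟨h1, h2⟩ | ⟨h1, h2, Z, h3, h4⟩ | ⟨h1, Z, h3, h4⟩
  · exact Or.inl ⟨h1.symm, h2.symm⟩
  · exact Or.inr (Or.inl ⟨h1.symm, fun h => h2 (hs _ _ h), Z, h4, h3⟩)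
  · exact Or.inr (Or.inr ⟨hs _ _ h1, Z, h4, h3⟩)

theorem R.mul' {c d : α} {W W' : M}
    (h : R g adj c W d W') (V : M) : R g adj c (W * V) d (W' * V) := by
  rcases h with ⟨h1, h2⟩ | ⟨h1, h2, Z, h3, h4⟩ | ⟨h1, Z, h3, h4⟩
  · exact Or.inl ⟨h1, by rw [h2]⟩
  · exact Or.inr (Or.inl ⟨h1, h2, Z * V, by rw [h3, mul_assoc], by rw [h4, mul_assoc]⟩)
  · exact Or.inr (Or.inr ⟨h1, Z * V, by rw [h3]; simp only [mul_assoc],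
      by rw [h4]; simp only [mul_assoc]⟩)

theorem R.trans' (hs : ∀ a b, adj a b → adj b a) (hi : ∀ a, ¬ adj a a)
    (ht : ∀ a b c, adj a b → adj b c → ¬ adj a c)
    (hc : ∀ a b, ¬ adj a b → ∀ X, g a * (g b * X) = g b * (g a * X))
    (hb : ∀ a b, adj a b → ∀ X, g a * (g b * (g a * X)) = g b * (g a * (g b * X)))
    (l : M → ℕ) (lm : ∀ x y, l (x * y) = l x + l y) (lg : ∀ a, l (g a) = 1)
    (k : ℕ) (H : ∀ a b X Y, l X < k → g a * X = g b * Y → R g adj a X b Y)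
    {c d e : α} {W W' W'' : M} (hW : l W' ≤ k)
    (h1 : R g adj c W d W') (h2 : R g adj d W' e W'') : R g adj c W e W'' := by
  have Hc : ∀ a X Y, l X < k → g a * X = g a * Y → X = Y := by
    intro a X Y hl h
    rcases H a a X Y hl h with ⟨_, h2⟩ | ⟨h1, _⟩ | ⟨h1, _⟩
    · exact h2
    · exact absurd rfl h1
    · exact absurd h1 (hi a)
  have Hm : ∀ a b X Y, a ≠ b → ¬ adj a b → l X < k → g a * X = g b * Y →
      ∃ Z, X = g b * Z ∧ Y = g a * Z := by
    intro a b X Y hn ha hl h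
    rcases H a b X Y hl h with ⟨h1, h2⟩ | ⟨_, _, h1⟩ | ⟨h1, _⟩
    · exact absurd h1 hn
    · exact h1
    · exact absurd h1 ha
  have Hb : ∀ a b X Y, adj a b → l X < k → g a * X = g b * Y →
      ∃ Z, X = g b * (g a * Z) ∧ Y = g a * (g b * Z) := by
    intro a b X Y ha hl h
    rcases H a b X Y hl h with ⟨h1, h2⟩ | ⟨_, h1, _⟩ | ⟨_, h1⟩
    · subst h1; exact absurd ha (hi a)
    · exact absurd ha h1
    · exact h1
  rcases h1 with ⟨rfl, rfl⟩ | ⟨n1, a1, Z, rfl, rfl⟩ | ⟨a1, Z, rfl, rfl⟩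
  · exact h2
  · -- c, d commute
    rcases h2 with ⟨rfl, rfl⟩ | ⟨n2, a2, Z', e1, rfl⟩ | ⟨a2, Z', e1, rfl⟩
    · exact Or.inr (Or.inl ⟨n1, a1, Z, rfl, rfl⟩)
    · have e0 := congrArg l e1
      simp only [lm, lg] at hW e0
      by_cases hce : c = e
      · subst hce
        rw [Hc _ _ _ (by (try simp only [lm, lg]); omega) e1]; exact R.refl' _ _
      by_cases ace : adj c e
      · obtain ⟨U, rfl, rfl⟩ := Hb _ _ _ _ ace (by (try simp only [lm, lg]); omega) e1
        refine Or.inr (Or.inr ⟨ace, g d * U, ?_, ?_⟩)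
        · rw [hc d e a2, hc c d a1]
        · rw [← hc c d a1, hc d e a2]
      · obtain ⟨U, rfl, rfl⟩ := Hm _ _ _ _ hce ace (by (try simp only [lm, lg]); omega) e1
        refine Or.inr (Or.inl ⟨hce, ace, g d * U, ?_, ?_⟩)
        · rw [hc d e a2]
        · rw [hc c d a1]
    · have e0 := congrArg l e1
      simp only [lm, lg] at hW e0
      have hce : c ≠ e := by rintro rfl; exact a1 (hs _ _ a2)
      by_cases ace : adj c e
      · obtain ⟨U, rfl, e2⟩ := Hb _ _ _ _ ace (by (try simp only [lm, lg]); omega) e1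
        have e0' := congrArg l e2
        simp only [lm, lg] at e0 e0' hW
        obtain ⟨V, rfl, e3⟩ := Hm _ _ _ _ n1.symm (fun h => a1 (hs _ _ h)) (by (try simp only [lm, lg]); omega) e2
        simp only [lm, lg] at e0 e0' hW
        have e0'' := congrArg l e3
        simp only [lm, lg] at e0''
        obtain ⟨T, rfl, rfl⟩ := Hb _ _ _ _ (hs _ _ a2) (by (try simp only [lm, lg]); omega) e3
        refine Or.inr (Or.inr ⟨ace, g d * (g e * (g c * T)), ?_, ?_⟩)
        · rw [hc c d a1, hb d e a2, ← hb c e ace, hc c d a1]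
        · rw [← hb c e ace, ← hc c d a1, ← hb d e a2, ← hc c d a1]
      · obtain ⟨U, rfl, e2⟩ := Hm _ _ _ _ hce ace (by (try simp only [lm, lg]); omega) e1
        have e0' := congrArg l e2
        simp only [lm, lg] at e0 e0' hW
        obtain ⟨V, rfl, rfl⟩ := Hm _ _ _ _ n1.symm (fun h => a1 (hs _ _ h)) (by (try simp only [lm, lg]); omega) e2
        refine Or.inr (Or.inl ⟨hce, ace, g d * (g e * V), ?_, ?_⟩)
        · rw [hb d e a2]
        · rw [hc c d a1, hc c e ace]
  · rcases h2 with ⟨rfl, rfl⟩ | ⟨n2, a2, Z', e1, rfl⟩ | ⟨a2, Z', e1, rfl⟩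
    · exact Or.inr (Or.inr ⟨a1, Z, rfl, rfl⟩)
    · have e0 := congrArg l e1
      simp only [lm, lg] at hW e0
      have hce : c ≠ e := by rintro rfl; exact a2 (hs _ _ a1)
      by_cases ace : adj c e
      · obtain ⟨U, e2, rfl⟩ := Hb _ _ _ _ ace (by (try simp only [lm, lg]); omega) e1
        have e0' := congrArg l e2
        simp only [lm, lg] at e0 e0' hW
        obtain ⟨V, rfl, e3⟩ := Hm _ _ _ _ n2 a2 (by (try simp only [lm, lg]); omega) e2
        simp only [lm, lg] at e0 e0' hW
        have e0'' := congrArg l e3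
        simp only [lm, lg] at e0''
        obtain ⟨T, rfl, rfl⟩ := Hb _ _ _ _ a1 (by (try simp only [lm, lg]); omega) e3
        refine Or.inr (Or.inr ⟨ace, g d * (g c * (g e * T)), ?_, ?_⟩)
        · rw [hb c e ace, hc d e a2, hb c d a1, hc d e a2]
        · rw [← hc d e a2, ← hb c d a1, hb c e ace, hc d e a2]
      · obtain ⟨U, e2, rfl⟩ := Hm _ _ _ _ hce ace (by (try simp only [lm, lg]); omega) e1
        have e0' := congrArg l e2
        simp only [lm, lg] at e0 e0' hW
        obtain ⟨V, rfl, rfl⟩ := Hm _ _ _ _ n2 a2 (by (try simp only [lm, lg]); omega) e2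
        refine Or.inr (Or.inl ⟨hce, ace, g d * (g c * V), ?_, ?_⟩)
        · rw [hc c e ace, hc d e a2]
        · rw [hb c d a1]
    · have e0 := congrArg l e1
      simp only [lm, lg] at hW e0
      have ace : ¬ adj c e := ht _ _ _ a1 a2
      by_cases hce : c = e
      · subst hce
        have e2 := Hc _ _ _ (by simp only [lm, lg]; omega) e1
        rw [Hc _ _ _ (by (try simp only [lm, lg]); omega) e2]; exact R.refl' _ _
      obtain ⟨U, e2, e3⟩ := Hm _ _ _ _ hce ace (by simp only [lm, lg]; omega) e1
      have e0' := congrArg l e2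
      have e0'' := congrArg l e3
      simp only [lm, lg] at e0' e0''
      obtain ⟨V, rfl, rfl⟩ := Hb _ _ _ _ a2 (by (try simp only [lm, lg]); omega) e2
      obtain ⟨T, rfl, e4⟩ := Hb _ _ _ _ (hs _ _ a1) (by (try simp only [lm, lg]); omega) e3
      simp only [lm, lg] at e0 e0' e0'' hW
      have e5 := Hc _ _ _ (by simp only [lm, lg]; omega) e4
      obtain ⟨S, rfl, rfl⟩ := Hm _ _ _ _ (Ne.symm hce) (fun h => ace (hs _ _ h)) (by (try simp only [lm, lg]); omega) e5
      refine Or.inr (Or.inl ⟨hce, ace, g d * (g e * (g c * (g d * S))), ?_, ?_⟩)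
      · rw [hc c e ace, hb c d a1, hb d e a2]
      · rw [← hc c e ace, ← hb d e a2, ← hb c d a1, hc c e ace]
end
end BraidAux
namespace BraidAux

def adj {N : ℕ} (i j : Fin N) : Prop := (i : ℕ) + 1 = j ∨ (j : ℕ) + 1 = i

inductive BRel (N : ℕ) : FreeMonoid (Fin N) → FreeMonoid (Fin N) → Prop
  | comm (a b : Fin N) (h : ¬ adj a b) :
      BRel N (FreeMonoid.of a * FreeMonoid.of b) (FreeMonoid.of b * FreeMonoid.of a)
  | braid (a b : Fin N) (h : adj a b) :
      BRel N (FreeMonoid.of a * (FreeMonoid.of b * FreeMonoid.of a))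
        (FreeMonoid.of b * (FreeMonoid.of a * FreeMonoid.of b))

/-- the positive braid monoid -/
abbrev BM (N : ℕ) := PresentedMonoid (BRel N)

abbrev gen {N : ℕ} (i : Fin N) : BM N := PresentedMonoid.of (BRel N) i

theorem gen_comm {N : ℕ} (a b : Fin N) (h : ¬ adj a b) : gen a * gen b = gen b * gen a :=
  PresentedMonoid.mk_eq_mk_of_rel (BRel.comm a b h)

theorem gen_braid {N : ℕ} (a b : Fin N) (h : adj a b) :
    gen a * (gen b * gen a) = gen b * (gen a * gen b) :=
  PresentedMonoid.mk_eq_mk_of_rel (BRel.braid a b h)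

def lenHom (N : ℕ) : BM N →* Multiplicative ℕ :=
  PresentedMonoid.lift (fun _ => Multiplicative.ofAdd 1) (by
    intro a b h
    cases h <;> simp)

def len {N : ℕ} (x : BM N) : ℕ := Multiplicative.toAdd (lenHom N x)

theorem len_mul {N : ℕ} (x y : BM N) : len (x * y) = len x + len y := by
  simp [len]

theorem len_gen {N : ℕ} (a : Fin N) : len (gen a) = 1 := by
  simp [len, lenHom]

theorem len_one {N : ℕ} : len (1 : BM N) = 0 := by
  simp [len]

theorem adj_symm {N : ℕ} (a b : Fin N) (h : adj a b) : adj b a := by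
  unfold adj at *; omega

theorem gen_rec {N : ℕ} {p : BM N → Prop} (h1 : p 1) (hm : ∀ a x, p x → p (gen a * x))
    (x : BM N) : p x := by
  induction x using PresentedMonoid.inductionOn with | _ w
  induction w using FreeMonoid.inductionOn' with
  | one => exact h1
  | of_mul a w ih => 
    rw [map_mul]
    exact hm _ _ ih

def WS {N : ℕ} (u v : FreeMonoid (Fin N)) : Prop :=
  (u = 1 ∧ v = 1) ∨ ∃ c w d w', u = FreeMonoid.of c * w ∧ v = FreeMonoid.of d * w' ∧
    R gen adj c (PresentedMonoid.mk (BRel N) w) d (PresentedMonoid.mk (BRel N) w')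

theorem of_mul_inj {N : ℕ} {c d : Fin N} {w w' : FreeMonoid (Fin N)}
    (h : FreeMonoid.of c * w = FreeMonoid.of d * w') : c = d ∧ w = w' := 
  List.cons.inj h

theorem of_mul_ne {N : ℕ} {c : Fin N} {w : FreeMonoid (Fin N)}
    (h : FreeMonoid.of c * w = 1) : False := 
  List.cons_ne_nil _ _ h

theorem WS_of {N k : ℕ} 
    (H : ∀ (a b : Fin N) X Y, len X < k → gen a * X = gen b * Y → R gen adj a X b Y)
    (u v : FreeMonoid (Fin N)) (h : ConGen.Rel (BRel N) u v) 
    (hl : len (PresentedMonoid.mk (BRel N) u) ≤ k + 1) : WS u v := by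
  have key : ∀ {u v}, ConGen.Rel (BRel N) u v → 
      PresentedMonoid.mk (BRel N) u = PresentedMonoid.mk (BRel N) v := 
    fun h => PresentedMonoid.mk_eq_mk_iff.2 h
  induction h with
  | of x y h => 
    right
    cases h with
    | comm a b h => 
      refine ⟨_, _, _, _, rfl, rfl, ?_⟩
      by_cases hab : a = b
      · subst hab; exact R.refl' _ _
      · exact Or.inr (Or.inl ⟨hab, h, 1, (mul_one _).symm, (mul_one _).symm⟩)
    | braid a b h =>
      refine ⟨_, _, _, _, rfl, rfl, ?_⟩
      refine Or.inr (Or.inr ⟨h, 1, ?_, ?_⟩) <;> rw [map_mul, mul_one] <;> rfl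
  | refl x => 
    induction x using FreeMonoid.inductionOn' with
    | one => exact Or.inl ⟨rfl, rfl⟩
    | of_mul a w ih => exact Or.inr ⟨_, _, _, _, rfl, rfl, R.refl' _ _⟩
  | symm h ih => 
    rw [← key h] at hl
    rcases ih hl with ⟨h1, h2⟩ | ⟨c, w, d, w', h1, h2, h3⟩
    · exact Or.inl ⟨h2, h1⟩
    · exact Or.inr ⟨_, _, _, _, h2, h1, R.symm' adj_symm h3⟩
  | trans h h' ih ih' =>
    have hl' := hl
    rw [key h] at hl'
    rcases ih hl with ⟨rfl, rfl⟩ | ⟨c, w, d, w', rfl, rfl, h3⟩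
    · exact ih' hl
    · rcases ih' hl' with ⟨h1, h2⟩ | ⟨d', w'', e, w''', h1, rfl, h4⟩
      · exact (of_mul_ne h1).elim
      · obtain ⟨rfl, rfl⟩ := of_mul_inj h1
        refine Or.inr ⟨_, _, _, _, rfl, rfl, ?_⟩
        refine R.trans' adj_symm ?_ ?_ ?_ ?_ len len_mul len_gen k H ?_ h3 h4
        · intro a h; unfold adj at h; omega
        · intro a b c; unfold adj; omega
        · intro a b h X; rw [← mul_assoc, gen_comm a b h, mul_assoc]
        · intro a b h X
          have := congrArg (· * X) (gen_braid a b h)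
          simpa only [mul_assoc] using this
        · rw [map_mul, len_mul] at hl'
          have := len_gen d
          change len (gen d) + _ ≤ _ at hl'
          omega
  | @mul w x y z h h' ih ih' =>
    rw [map_mul, len_mul] at hl
    rcases ih (by omega) with ⟨rfl, rfl⟩ | ⟨c, w, d, w', rfl, rfl, h3⟩
    · rw [one_mul, one_mul]; exact ih' (by omega)
    · refine Or.inr ⟨_, _, _, _, mul_assoc _ _ _, mul_assoc _ _ _, ?_⟩
      rw [map_mul, map_mul, key h']
      exact R.mul' h3 _

theorem main_R {N : ℕ} (a b : Fin N) (X Y : BM N) (h : gen a * X = gen b * Y) :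
    R gen adj a X b Y := by
  have : ∀ k, ∀ (a b : Fin N) X Y, len X < k → gen a * X = gen b * Y → R gen adj a X b Y := by
    intro k
    induction k with
    | zero => intro a b X Y h; omega
    | succ k ih => 
      intro a b X Y hl h
      induction X using PresentedMonoid.inductionOn with | _ x
      induction Y using PresentedMonoid.inductionOn with | _ y
      have h' : PresentedMonoid.mk (BRel N) (FreeMonoid.of a * x) = 
        PresentedMonoid.mk (BRel N) (FreeMonoid.of b * y) := by rw [map_mul, map_mul]; exact h
      rcases WS_of ih _ _ (PresentedMonoid.mk_eq_mk_iff.1 h') (by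
          rw [map_mul, len_mul]
          have := len_gen a
          change len (gen a) + _ ≤ _
          omega) with ⟨h1, h2⟩ | ⟨d', w'', e, w''', h1, h2, h4⟩
      · exact (of_mul_ne h1).elim
      · obtain ⟨rfl, rfl⟩ := of_mul_inj h1
        obtain ⟨rfl, rfl⟩ := of_mul_inj h2
        exact h4
  exact this (len X + 1) a b X Y (by omega) h

theorem gen_cancel {N : ℕ} (a : Fin N) (X Y : BM N) (h : gen a * X = gen a * Y) : X = Y := by
  rcases main_R a a X Y h with ⟨_, h2⟩ | ⟨h1, _⟩ | ⟨h1, _⟩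
  · exact h2
  · exact absurd rfl h1
  · unfold adj at h1; omega

theorem cancel {N : ℕ} (A X Y : BM N) (h : A * X = A * Y) : X = Y := by
  induction A using gen_rec with
  | h1 => simpa using h
  | hm a x ih => exact ih (gen_cancel a _ _ (by simpa only [mul_assoc] using h))

theorem gen_far {N : ℕ} (a b : Fin N) (X Y : BM N) (hn : a ≠ b) (ha : ¬ adj a b)
    (h : gen a * X = gen b * Y) : ∃ Z, X = gen b * Z ∧ Y = gen a * Z := by
  rcases main_R a b X Y h with ⟨h1, h2⟩ | ⟨_, _, h1⟩ | ⟨h1, _⟩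
  · exact absurd h1 hn
  · exact h1
  · exact absurd h1 ha

theorem gen_near {N : ℕ} (a b : Fin N) (X Y : BM N) (ha : adj a b)
    (h : gen a * X = gen b * Y) : ∃ Z, X = gen b * (gen a * Z) ∧ Y = gen a * (gen b * Z) := by
  rcases main_R a b X Y h with ⟨h1, h2⟩ | ⟨_, h1, _⟩ | ⟨_, h1⟩
  · subst h1; unfold adj at ha; omega
  · exact absurd ha h1
  · exact h1

theorem gen_ne {N : ℕ} (a b : Fin N) (h : a ≠ b) : gen a ≠ gen b := by
  intro he
  have l1 := len_one (N := N)
  rcases main_R a b 1 1 (by rw [he]) with ⟨h1, h2⟩ | ⟨_, _, Z, h1, _⟩ | ⟨_, Z, h1, _⟩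
  · exact h h1
  · rw [h1, len_mul, len_gen] at l1; omega
  · rw [h1, len_mul, len_gen] at l1; omega

end BraidAux
namespace BraidAux

section
variable {M : Type*} [Monoid M]

def up (s : ℕ → M) : ℕ → M
  | 0 => 1
  | k + 1 => up s k * s k

def dn (s : ℕ → M) : ℕ → M
  | 0 => 1
  | k + 1 => s k * dn s k

def Del (s : ℕ → M) : ℕ → M
  | 0 => 1
  | k + 1 => Del s k * dn s (k + 1)

/-- braid relations for a sequence -/
structure IsBr (s : ℕ → M) (N : ℕ) : Prop where
  comm : ∀ i j, i + 2 ≤ j → j < N → s i * s j = s j * s i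
  braid : ∀ i, i + 1 < N → s i * (s (i + 1) * s i) = s (i + 1) * (s i * s (i + 1))

variable {s : ℕ → M} {N : ℕ}

theorem IsBr.up_comm (h : IsBr s N) (k j : ℕ) (hk : k + 1 ≤ j) (hj : j < N) :
    up s k * s j = s j * up s k := by
  induction k with
  | zero => simp [up]
  | succ k ih => rw [up, mul_assoc, h.comm k j (by omega) hj, ← mul_assoc, ih (by omega), mul_assoc]

theorem IsBr.dn_comm (h : IsBr s N) (k j : ℕ) (hk : k + 1 ≤ j) (hj : j < N) :
    dn s k * s j = s j * dn s k := by
  induction k with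
  | zero => simp [dn]
  | succ k ih => rw [dn, mul_assoc, ih (by omega), ← mul_assoc, h.comm k j (by omega) hj, mul_assoc]

theorem IsBr.Del_comm (h : IsBr s N) (k j : ℕ) (hk : k + 1 ≤ j) (hj : j < N) :
    Del s k * s j = s j * Del s k := by
  induction k with
  | zero => simp [Del]
  | succ k ih => rw [Del, mul_assoc, h.dn_comm _ j (by omega) hj, ← mul_assoc, ih (by omega), mul_assoc]

theorem IsBr.Del_succ (h : IsBr s N) (k : ℕ) (hk : k < N) :
    Del s (k + 1) = up s (k + 1) * Del s k := by
  induction k with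
  | zero => simp [Del, up, dn]
  | succ k ih =>
    have e : Del s k * dn s (k + 1) = up s (k + 1) * Del s k := ih (by omega)
    have e2 : up s (k + 1 + 1) = up s (k + 1) * s (k + 1) := rfl
    rw [Del, ih (by omega), dn, mul_assoc, ← mul_assoc (Del s k), h.Del_comm k (k + 1) (by omega) hk,
      mul_assoc, e, e2, mul_assoc]

theorem IsBr.up_shift (h : IsBr s N) (k i : ℕ) (hk : k ≤ N) (hi : i + 1 < k) :
    up s k * s i = s (i + 1) * up s k := by
  induction k with
  | zero => omega
  | succ k ih =>
    rcases Nat.lt_or_ge (i + 1) k with h1 | h1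
    · rw [up, mul_assoc, ← h.comm i k (by omega) (by omega), ← mul_assoc, ih (by omega) h1, mul_assoc]
    · obtain rfl : k = i + 1 := by omega
      rw [up, up, mul_assoc, mul_assoc, h.braid i (by omega), ← mul_assoc,
        h.up_comm i (i + 1) le_rfl (by omega)]
      simp only [mul_assoc]

theorem IsBr.dn_shift (h : IsBr s N) (k i : ℕ) (hk : k ≤ N) (hi : i + 1 < k) :
    dn s k * s (i + 1) = s i * dn s k := by
  induction k with
  | zero => omega
  | succ k ih =>
    rcases Nat.lt_or_ge (i + 1) k with h1 | h1
    · rw [dn, mul_assoc, ih (by omega) h1, ← mul_assoc, ← h.comm i k (by omega) (by omega), mul_assoc]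
    · obtain rfl : k = i + 1 := by omega
      rw [dn, dn, mul_assoc, mul_assoc, h.dn_comm i (i + 1) le_rfl (by omega)]
      have := congrArg (· * dn s i) (h.braid i (by omega))
      simp only [mul_assoc] at this
      exact this.symm

theorem IsBr.Del_shift (h : IsBr s N) (k i j : ℕ) (hk : k ≤ N) (hi : i + j + 1 = k) :
    Del s k * s i = s j * Del s k := by
  induction k generalizing i j with
  | zero => omega
  | succ k ih =>
    rcases i with _ | i
    · obtain rfl : j = k := by omega
      rcases j with _ | j
      · simp [Del, dn]
      · rw [h.Del_succ _ (by omega), mul_assoc, ih 0 j (by omega) (by omega), ← mul_assoc,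
          h.up_shift _ j (by omega) (by omega), mul_assoc]
    · rw [Del, mul_assoc, h.dn_shift _ i (by omega) (by omega), ← mul_assoc,
        ih i j (by omega) (by omega), mul_assoc]

/-- `s k * s (k-1) * ⋯` with `j` factors -/
def rr (s : ℕ → M) (k : ℕ) : ℕ → M
  | 0 => 1
  | j + 1 => rr s k j * s (k - j)

theorem rr_mul_dn (k j : ℕ) (hj : j ≤ k + 1) : rr s k j * dn s (k + 1 - j) = dn s (k + 1) := by
  induction j with
  | zero => simp [rr]
  | succ j ih =>
    rw [← ih (by omega), rr, show k + 1 - j = (k - j) + 1 by omega, dn, mul_assoc]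
    congr 3; omega

theorem IsBr.rr_up (h : IsBr s N) (k j : ℕ) (hk : k < N) (hj : j ≤ k) :
    rr s k j * up s (k + 1) = up s k * rr s k (j + 1) := by
  induction j with
  | zero => simp [rr, up]
  | succ j ih =>
    have e : s (k - j) * up s (k + 1) = up s (k + 1) * s (k - (j + 1)) := by
      rw [h.up_shift (k + 1) (k - (j + 1)) (by omega) (by omega)]
      congr 2; omega
    rw [rr, mul_assoc, e, ← mul_assoc, ih (by omega), rr, rr, rr, mul_assoc]
  
theorem IsBr.up_pow (h : IsBr s N) (k j : ℕ) (hk : k < N) (hj : j ≤ k + 1) :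
    up s (k + 1) ^ j = up s k ^ j * rr s k j := by
  induction j with
  | zero => simp [rr]
  | succ j ih =>
    rw [pow_succ, ih (by omega), mul_assoc, h.rr_up k j hk (by omega), ← mul_assoc, ← pow_succ]

theorem IsBr.Del_sq (h : IsBr s N) (k : ℕ) (hk : k ≤ N) : Del s k ^ 2 = up s k ^ (k + 1) := by
  induction k with
  | zero => simp [Del, up]
  | succ k ih =>
    rw [sq]
    nth_rw 1 [h.Del_succ k (by omega)]
    rw [Del, mul_assoc, ← mul_assoc (Del s k), ← sq, ih (by omega), pow_succ' _ (k + 1),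
      h.up_pow k (k + 1) (by omega) le_rfl, ← rr_mul_dn k (k + 1) le_rfl]
    simp [dn]

theorem Del_factor (i k : ℕ) (hi : i < k) : ∃ A B, Del s k = A * (s i * B) := by
  induction k with
  | zero => omega
  | succ k ih =>
    rcases Nat.lt_or_ge i k with h1 | h1
    · obtain ⟨A, B, h⟩ := ih h1
      exact ⟨A, B * dn s (k + 1), by rw [Del, h]; simp only [mul_assoc]⟩
    · obtain rfl : i = k := by omega
      exact ⟨Del s i, dn s i, rfl⟩

theorem IsBr.Del_sq_comm (h : IsBr s N) (i : ℕ) (hi : i < N) :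
    Del s N ^ 2 * s i = s i * Del s N ^ 2 := by
  rw [sq, mul_assoc, h.Del_shift N i (N - 1 - i) le_rfl (by omega), ← mul_assoc,
    h.Del_shift N (N - 1 - i) i le_rfl (by omega), mul_assoc]

theorem map_up {M' : Type*} [Monoid M'] (f : M →* M') (k : ℕ) :
    f (up s k) = up (fun i => f (s i)) k := by
  induction k with
  | zero => simp [up]
  | succ k ih => simp [up, ih]

theorem map_dn {M' : Type*} [Monoid M'] (f : M →* M') (k : ℕ) :
    f (dn s k) = dn (fun i => f (s i)) k := by
  induction k with
  | zero => simp [dn]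
  | succ k ih => simp [dn, ih]

theorem map_Del {M' : Type*} [Monoid M'] (f : M →* M') (k : ℕ) :
    f (Del s k) = Del (fun i => f (s i)) k := by
  induction k with
  | zero => simp [Del]
  | succ k ih => simp [Del, ih, map_dn]

end
end BraidAux
namespace BraidAux

def gs (N : ℕ) (i : ℕ) : BM N := if h : i < N then gen ⟨i, h⟩ else 1

theorem gs_eq {N i : ℕ} (h : i < N) : gs N i = gen ⟨i, h⟩ := dif_pos h

theorem gs_isBr (N : ℕ) : IsBr (gs N) N where
  comm i j h hj := by
    rw [gs_eq hj, gs_eq (show i < N by omega)]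
    apply gen_comm; simp only [adj]; omega
  braid i h := by
    rw [gs_eq h, gs_eq (show i < N by omega)]
    exact gen_braid _ _ (Or.inl rfl)

theorem gs_far {N i j : ℕ} (hi : i < N) (hj : j < N) (h : i + 2 ≤ j) {X Y : BM N}
    (e : gs N i * X = gs N j * Y) : ∃ Z, X = gs N j * Z ∧ Y = gs N i * Z := by
  rw [gs_eq hi, gs_eq hj] at *
  apply gen_far _ _ _ _ _ _ e
  · intro h; simp at h; omega
  · simp only [adj]; omega

theorem gs_near {N i j : ℕ} (hi : i < N) (hj : j < N) (h : i + 1 = j ∨ j + 1 = i) {X Y : BM N}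
    (e : gs N i * X = gs N j * Y) :
    ∃ Z, X = gs N j * (gs N i * Z) ∧ Y = gs N i * (gs N j * Z) := by
  rw [gs_eq hi, gs_eq hj] at *
  exact gen_near _ _ _ _ h e

theorem dvd_s {N k j : ℕ} (hk : k + 2 ≤ j) (hj : j < N) {w : BM N} (h : gs N j ∣ gs N k * w) :
    gs N j ∣ w := by
  obtain ⟨Y, e⟩ := h
  obtain ⟨Z, h1, _⟩ := gs_far (by omega) hj hk e
  exact ⟨Z, h1⟩

theorem dvd_up {N k j : ℕ} (hk : k + 1 ≤ j) (hj : j < N) {w : BM N}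
    (h : gs N j ∣ up (gs N) k * w) : gs N j ∣ w := by
  induction k generalizing w with
  | zero => simpa [up] using h
  | succ k ih =>
    rw [up, mul_assoc] at h
    exact dvd_s hk hj (ih (by omega) h)

theorem dvd_dn {N k j : ℕ} (hk : k + 1 ≤ j) (hj : j < N) {w : BM N}
    (h : gs N j ∣ dn (gs N) k * w) : gs N j ∣ w := by
  induction k generalizing w with
  | zero => simpa [dn] using h
  | succ k ih =>
    rw [dn, mul_assoc] at h
    exact ih (by omega) (dvd_s hk hj h)

theorem dvd_Del {N k j : ℕ} (hk : k + 1 ≤ j) (hj : j < N) {w : BM N}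
    (h : gs N j ∣ Del (gs N) k * w) : gs N j ∣ w := by
  induction k generalizing w with
  | zero => simpa [Del] using h
  | succ k ih =>
    rw [Del, mul_assoc] at h
    exact dvd_dn hk hj (ih (by omega) h)

theorem Del_dvd_succ {N k : ℕ} (hk : k < N) (z : BM N) (h1 : Del (gs N) k ∣ z)
    (h2 : gs N k ∣ z) : Del (gs N) (k + 1) ∣ z := by
  induction k generalizing z with
  | zero => simpa [Del, dn] using h2
  | succ k ih =>
    have hB := gs_isBr N
    obtain ⟨w, rfl⟩ := h1
    have h3 := h2
    rw [hB.Del_succ k (by omega), up, mul_assoc, mul_assoc] at h3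
    obtain ⟨Y, e⟩ := dvd_up le_rfl hk h3
    obtain ⟨Z, e1, -⟩ := gs_near (by omega) hk (Or.inl rfl) e
    obtain ⟨w', rfl⟩ := dvd_Del le_rfl hk ⟨_, e1⟩
    rw [← mul_assoc, hB.Del_comm k (k + 1) le_rfl hk, mul_assoc] at e1
    have e2 := cancel _ _ _ e1
    obtain ⟨v, e3⟩ := ih (by omega) (Del (gs N) k * w') ⟨_, rfl⟩ ⟨_, e2⟩
    rw [Del, mul_assoc] at e3
    have e4 := cancel _ _ _ e3
    subst e4
    refine ⟨v, ?_⟩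
    have e5 : Del (gs N) (k + 1 + 1) =
      Del (gs N) (k + 1) * (gs N (k + 1) * dn (gs N) (k + 1)) := rfl
    rw [e5]
    simp only [mul_assoc]

theorem Del_dvd {N : ℕ} (z : BM N) (h : ∀ i < N, gs N i ∣ z) (k : ℕ) (hk : k ≤ N) :
    Del (gs N) k ∣ z := by
  induction k with
  | zero => exact ⟨z, by simp [Del]⟩
  | succ k ih => exact Del_dvd_succ hk z (ih (by omega)) (h k hk)

theorem qc_step {N : ℕ} (z : BM N) (f : ℕ → ℕ) (hf : ∀ i < N, gs N i * z = z * gs N (f i))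
    {i j : ℕ} (hi : i < N) (hj : j < N) (hij : i + 1 = j ∨ j + 1 = i) (h : gs N i ∣ z) :
    gs N j ∣ z := by
  obtain ⟨w, rfl⟩ := h
  have h1 := hf j hj
  rw [mul_assoc] at h1
  obtain ⟨Z, e1, -⟩ := gs_near hj hi (by omega) h1
  have e2 := cancel _ _ _ e1
  have h2 := hf i hi
  rw [mul_assoc (gs N i) w] at h2
  have h3 := cancel _ _ _ h2
  rw [h3, e2, mul_assoc]
  exact ⟨_, rfl⟩

theorem qc_all {N : ℕ} (z : BM N) (f : ℕ → ℕ) (hf : ∀ i < N, gs N i * z = z * gs N (f i))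
    {i : ℕ} (hi : i < N) (h : gs N i ∣ z) (j : ℕ) (hj : j < N) : gs N j ∣ z := by
  have h0 : gs N 0 ∣ z := by
    induction i with
    | zero => exact h
    | succ i ih => exact ih (by omega) (qc_step z f hf hi (by omega) (Or.inr rfl) h)
  induction j with
  | zero => exact h0
  | succ j ih => exact qc_step z f hf (i := j) (by omega) hj (Or.inl rfl) (ih (by omega))

theorem qc_main {N : ℕ} (n : ℕ) (z : BM N) (hn : len z < n)
    (hf : (∀ i < N, gs N i * z = z * gs N i) ∨ (∀ i < N, gs N i * z = z * gs N (N - 1 - i))) :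
    ∃ k : ℕ, z = Del (gs N) N ^ k := by
  induction n generalizing z with
  | zero => omega
  | succ n ih =>
    have hcases : z = 1 ∨ ∃ a x, z = gen a * x := by
      induction z using gen_rec with
      | h1 => exact Or.inl rfl
      | hm a x _ => exact Or.inr ⟨a, x, rfl⟩
    rcases hcases with rfl | ⟨a, x, hz⟩
    · exact ⟨0, by simp⟩
    have ha : gs N a ∣ z := ⟨x, by rw [gs_eq a.2]; exact hz⟩
    have hall : ∀ j < N, gs N j ∣ z := by
      rcases hf with hf | hf
      · exact qc_all z _ hf a.2 ha
      · exact qc_all z _ hf a.2 ha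
    obtain ⟨w, hw⟩ := Del_dvd z hall N le_rfl
    have hB := gs_isBr N
    have hlen : len w < n := by
      obtain ⟨A, B, e⟩ := Del_factor (s := gs N) a N a.2
      rw [hw, e, len_mul, len_mul, len_mul, gs_eq a.2, len_gen] at hn
      omega
    have hsh : ∀ i < N, ∀ y, gs N (N - 1 - i) * z = z * y → gs N i * w = w * y := by
      intro i hi y hy
      rw [hw, ← mul_assoc, ← hB.Del_shift N i (N - 1 - i) le_rfl (by omega), mul_assoc,
        mul_assoc] at hy
      exact cancel _ _ _ hy
    obtain ⟨k, hk⟩ := ih w hlen (by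
      rcases hf with hf | hf
      · right
        intro i hi
        exact hsh i hi _ (hf _ (by omega))
      · left
        intro i hi
        have := hsh i hi _ (hf _ (by omega))
        rwa [show N - 1 - (N - 1 - i) = i by omega] at this)
    exact ⟨k + 1, by rw [hw, hk, pow_succ']⟩

def DD (N : ℕ) : BM N := Del (gs N) N ^ 2

theorem DD_comm {N : ℕ} (x : BM N) : DD N * x = x * DD N := by
  induction x using gen_rec with
  | h1 => simp
  | hm a x ih =>
    have := (gs_isBr N).Del_sq_comm a a.2
    rw [gs_eq a.2] at this
    rw [← mul_assoc, DD, this, mul_assoc, ← DD, ih, mul_assoc]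

theorem DD_pow_comm {N : ℕ} (k : ℕ) (x : BM N) : DD N ^ k * x = x * DD N ^ k :=
  (Commute.pow_left (DD_comm x : Commute _ _) k)

theorem center_BM {N : ℕ} (hN : 2 ≤ N) (z : BM N) (hz : ∀ x, x * z = z * x) :
    ∃ k : ℕ, z = DD N ^ k := by
  obtain ⟨k, hk⟩ := qc_main _ z (Nat.lt_succ_self _) (Or.inl fun i _ => hz _)
  rcases Nat.even_or_odd' k with ⟨l, rfl | rfl⟩
  · exact ⟨l, by rw [hk, DD, pow_mul]⟩
  · exfalso
    rw [pow_succ, pow_mul, ← DD] at hk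
    have h1 := hz (gs N 0)
    rw [hk, ← mul_assoc, ← DD_pow_comm, mul_assoc, mul_assoc] at h1
    have h2 := cancel _ _ _ h1
    rw [← (gs_isBr N).Del_shift N (N - 1) 0 le_rfl (by omega)] at h2
    have h3 := cancel _ _ _ h2
    rw [gs_eq (by omega), gs_eq (by omega)] at h3
    refine gen_ne _ _ ?_ h3
    intro h; simp at h; omega

theorem gen_compl {N : ℕ} (a : Fin N) : ∃ c, gen a * c = DD N ∧ c * gen a = DD N := by
  obtain ⟨A, B, e⟩ := Del_factor (s := gs N) a N a.2
  rw [gs_eq a.2] at e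
  have e' : DD N = A * (gen a * (B * Del (gs N) N)) := by
    rw [DD, sq]; nth_rw 1 [e]; simp only [mul_assoc]
  have h1 : gen a * ((B * Del (gs N) N) * A) = DD N := by
    apply cancel A
    rw [← DD_comm, e']; simp only [mul_assoc]
  refine ⟨_, h1, ?_⟩
  apply cancel (gen a)
  rw [← mul_assoc, h1, DD_comm]

open OreLocalization in
noncomputable instance oreDD (N : ℕ) : OreSet (Submonoid.powers (DD N)) where
  ore_right_cancel r₁ r₂ s h := ⟨s, by
    obtain ⟨_, k, rfl⟩ := s
    simp only [DD_pow_comm]; exact h⟩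
  oreNum r _ := r
  oreDenom _ s := s
  ore_eq r s := by
    obtain ⟨_, k, rfl⟩ := s
    exact DD_pow_comm k r

abbrev Loc (N : ℕ) := OreLocalization (Submonoid.powers (DD N)) (BM N)

noncomputable def toLoc (N : ℕ) : BM N →* Loc N := OreLocalization.numeratorHom

theorem toLoc_inj (N : ℕ) : Function.Injective (toLoc N) := by
  intro x y h
  obtain ⟨u, v, h1, h2⟩ := OreLocalization.oreDiv_eq_iff.1 h
  simp only [OneMemClass.coe_one, mul_one] at h2
  rw [← h2] at h1
  exact (cancel _ _ _ h1).symm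

theorem toLoc_unit {N : ℕ} (a : Fin N) : IsUnit (toLoc N (gen a)) := by
  obtain ⟨c, h1, h2⟩ := gen_compl a
  have hu : IsUnit (toLoc N (DD N)) :=
    OreLocalization.numerator_isUnit (⟨DD N, Submonoid.mem_powers _⟩ : Submonoid.powers (DD N))
  obtain ⟨u, hu⟩ := hu
  have e1 : toLoc N (gen a) * toLoc N c = u := by rw [hu, ← map_mul, h1]
  have e2 : toLoc N c * toLoc N (gen a) = u := by rw [hu, ← map_mul, h2]
  have e3 : toLoc N (gen a) * (toLoc N c * ↑u⁻¹) = 1 := by rw [← mul_assoc, e1]; simp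
  have e4 : (↑u⁻¹ * toLoc N c) * toLoc N (gen a) = 1 := by rw [mul_assoc, e2]; simp
  exact isUnit_iff_exists.2 ⟨_, e3, by rw [← left_inv_eq_right_inv e4 e3, e4]⟩

end BraidAux
namespace BraidAux

theorem sigma_comm {n : ℕ} (a b : Fin (n - 1)) (h : (a : ℕ) + 1 < b) :
    (σ a : BraidGroup n) * σ b = σ b * σ a := by
  have : PresentedGroup.mk (braidRels n) (FreeGroup.of a * FreeGroup.of b * (FreeGroup.of a)⁻¹ *
      (FreeGroup.of b)⁻¹) = 1 :=
    PresentedGroup.one_of_mem (Or.inl ⟨a, b, h, rfl⟩)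
  simp only [map_mul, map_inv] at this
  have h2 := mul_inv_eq_one.1 this
  exact mul_inv_eq_iff_eq_mul.1 h2

theorem sigma_braid {n : ℕ} (a b : Fin (n - 1)) (h : (a : ℕ) + 1 = b) :
    (σ a : BraidGroup n) * σ b * σ a = σ b * σ a * σ b := by
  have : PresentedGroup.mk (braidRels n) (FreeGroup.of a * FreeGroup.of b * FreeGroup.of a *
      (FreeGroup.of b * FreeGroup.of a * FreeGroup.of b)⁻¹) = 1 :=
    PresentedGroup.one_of_mem (Or.inr ⟨a, b, h, rfl⟩)
  rw [map_mul, map_inv] at this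
  have h2 := mul_inv_eq_one.1 this
  simp only [map_mul] at h2
  exact h2

def phi (n : ℕ) : BM (n - 1) →* BraidGroup n :=
  PresentedMonoid.lift σ (by
    intro x y h
    cases h with
    | comm a b h =>
      simp only [map_mul, FreeMonoid.lift_eval_of]
      unfold adj at h
      rcases lt_trichotomy (a : ℕ) b with h1 | h1 | h1
      · exact sigma_comm a b (by omega)
      · rw [Fin.ext h1]
      · exact (sigma_comm b a (by omega)).symm
    | braid a b h =>
      simp only [map_mul, FreeMonoid.lift_eval_of, ← mul_assoc]
      rcases h with h | h
      · exact sigma_braid a b h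
      · exact (sigma_braid b a h).symm)

theorem phi_gen {n : ℕ} (a : Fin (n - 1)) : phi n (gen a) = σ a := rfl

noncomputable def uu {n : ℕ} (a : Fin (n - 1)) : (Loc (n - 1))ˣ := (toLoc_unit a).unit

theorem uu_coe {n : ℕ} (a : Fin (n - 1)) : (uu a : Loc (n - 1)) = toLoc _ (gen a) := rfl

noncomputable def psi (n : ℕ) : BraidGroup n →* (Loc (n - 1))ˣ :=
  PresentedGroup.toGroup (f := uu) (by
    rintro r (⟨a, b, h, rfl⟩ | ⟨a, b, h, rfl⟩)
    · simp only [map_mul, map_inv, FreeGroup.lift_apply_of]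
      rw [mul_inv_eq_one, mul_inv_eq_iff_eq_mul]
      ext
      simp only [Units.val_mul, uu_coe, ← map_mul]
      rw [gen_comm]
      unfold adj; omega
    · simp only [map_mul, map_inv, FreeGroup.lift_apply_of]
      rw [mul_inv_eq_one]
      ext
      simp only [Units.val_mul, uu_coe, ← map_mul]
      rw [mul_assoc, gen_braid _ _ (Or.inl h), mul_assoc])

theorem psi_phi (n : ℕ) : ((Units.coeHom _).comp ((psi n).comp (phi n))) = toLoc (n - 1) := by
  apply PresentedMonoid.ext
  intro x
  have : psi n (σ x) = uu x := PresentedGroup.toGroup.of _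
  change ((psi n (σ x) : (Loc (n - 1))ˣ) : Loc (n - 1)) = _
  rw [this]; rfl

theorem phi_inj (n : ℕ) : Function.Injective (phi n) := by
  have h := toLoc_inj (n - 1)
  rw [← psi_phi n] at h
  intro x y hxy
  apply h
  simp [hxy]

theorem braid_rec {n : ℕ} {p : BraidGroup n → Prop} (h1 : p 1) (hs : ∀ a, p (σ a))
    (hi : ∀ a, p (σ a)⁻¹) (hm : ∀ x y, p x → p y → p (x * y)) (g : BraidGroup n) : p g := by
  obtain ⟨w, rfl⟩ := PresentedGroup.mk_surjective (braidRels n) g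
  induction w using FreeGroup.induction_on with
  | C1 => exact h1
  | of a => exact hs a
  | inv_of a _ => exact hi a
  | mul x y hx hy => exact hm _ _ hx hy

theorem phi_DD_comm (n : ℕ) (g : BraidGroup n) : Commute (phi n (DD (n - 1))) g := by
  have h0 : ∀ a : Fin (n - 1), Commute (phi n (DD (n - 1))) (σ a) := by
    intro a
    rw [← phi_gen]
    change _ * _ = _ * _
    rw [← map_mul, DD_comm, map_mul]
  induction g using braid_rec with
  | h1 => exact Commute.one_right _
  | hs a => exact h0 a
  | hi a => exact (h0 a).inv_right
  | hm x y hx hy => exact hx.mul_right hy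

theorem exists_pos (n : ℕ) (g : BraidGroup n) :
    ∃ (k : ℕ) (m : BM (n - 1)), g * phi n (DD (n - 1)) ^ k = phi n m := by
  induction g using braid_rec with
  | h1 => exact ⟨0, 1, by simp⟩
  | hs a => exact ⟨0, gen a, by simp [phi_gen]⟩
  | hi a =>
    obtain ⟨c, h, -⟩ := gen_compl a
    exact ⟨1, c, by rw [pow_one, ← h, map_mul, phi_gen, inv_mul_cancel_left]⟩
  | hm x y hx hy =>
    obtain ⟨k, m, h⟩ := hx
    obtain ⟨k', m', h'⟩ := hy
    refine ⟨k + k', m * m', ?_⟩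
    rw [map_mul, ← h, ← h', pow_add, mul_assoc, mul_assoc, ← mul_assoc y,
      ← (Commute.pow_left (phi_DD_comm n y) k).eq, mul_assoc]

theorem sigma_eq {n : ℕ} (a : Fin (n - 1)) : (σ a : BraidGroup n) = phi n (gs (n - 1) a) := by
  rw [gs_eq a.2, phi_gen]

theorem range_up {M : Type*} [Monoid M] (s : ℕ → M) (k : ℕ) :
    ((List.range k).map s).prod = up s k := by
  induction k with
  | zero => simp [up]
  | succ k ih => rw [List.range_succ]; simp [up, ih]

theorem range_dn {M : Type*} [Monoid M] (s : ℕ → M) (k : ℕ) :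
    ((List.range k).reverse.map s).prod = dn s k := by
  induction k with
  | zero => simp [dn]
  | succ k ih => rw [List.range_succ, List.reverse_append]; simp [dn, ← ih]

theorem range_Del {M : Type*} [Monoid M] (s : ℕ → M) (k : ℕ) :
    ((List.range k).map (fun i => dn s (i + 1))).prod = Del s k := by
  induction k with
  | zero => simp [Del]
  | succ k ih => rw [List.range_succ]; simp [Del, ih]

theorem finRange_map {β : Type*} (N : ℕ) (f : ℕ → β) :
    (List.finRange N).map (fun i : Fin N => f (i : ℕ)) = (List.range N).map f := by
  rw [← List.map_coe_finRange_eq_range, List.map_map]; rfl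

theorem filter_range (N k : ℕ) (hk : k < N) :
    (List.range N).filter (fun i => decide (i ≤ k)) = List.range (k + 1) := by
  induction N with
  | zero => omega
  | succ N ih =>
    rw [List.range_succ, List.filter_append]
    rcases Nat.lt_or_ge k N with h | h
    · rw [ih h]; simp [h]
    · obtain rfl : k = N := by omega
      rw [List.range_succ, List.filter_eq_self.2]
      · simp
      · intro a ha; simp at ha; simp; omega

theorem up_eq (n : ℕ) :
    phi n (up (gs (n - 1)) (n - 1)) = ((List.finRange (n - 1)).map (σ (n := n))).prod := by
  rw [map_up, ← range_up, ← finRange_map]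
  congr 2
  funext a
  exact (sigma_eq a).symm

theorem halfTwist_eq (n : ℕ) : halfTwist n = phi n (Del (gs (n - 1)) (n - 1)) := by
  rw [map_Del, ← range_Del, ← finRange_map, halfTwist]
  congr 2
  funext k
  rw [← range_dn, ← filter_range (n - 1) k k.2, ← List.map_coe_finRange_eq_range,
    List.filter_map, ← List.map_reverse, List.map_map]
  congr 1
  have : (σ (n := n)) = (fun i => phi n (gs (n - 1) i)) ∘ Fin.val := by
    funext a; exact sigma_eq a
  rw [this]
  rfl

end BraidAux

/-- In `B_n` (`n ≥ 3`), `Δ² = (σ₁σ₂⋯σ_{n-1})ⁿ`, and this element generates the center. -/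
theorem center_braidGroup_eq_zpowers_fullTwist (n : ℕ) (hn : 3 ≤ n) :
    halfTwist n ^ 2 = (((List.finRange (n - 1)).map σ).prod) ^ n ∧
    Subgroup.center (BraidGroup n) = Subgroup.zpowers (halfTwist n ^ 2) := by
  have hN : 2 ≤ n - 1 := by omega
  have hD : halfTwist n ^ 2 = BraidAux.phi n (BraidAux.DD (n - 1)) := by
    rw [BraidAux.DD, map_pow, BraidAux.halfTwist_eq]
  constructor
  · rw [hD, BraidAux.DD, (BraidAux.gs_isBr _).Del_sq _ le_rfl, map_pow, BraidAux.up_eq,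
      show n - 1 + 1 = n by omega]
  · rw [hD]
    have hcen := BraidAux.phi_DD_comm n
    apply le_antisymm
    · intro z hz
      obtain ⟨k, m, hm⟩ := BraidAux.exists_pos n z
      have hz' := Subgroup.mem_center_iff.1 hz
      have hmc : ∀ x, x * m = m * x := by
        intro x
        apply BraidAux.phi_inj n
        rw [map_mul, map_mul, ← hm, ← mul_assoc, hz', mul_assoc, mul_assoc,
          (Commute.pow_left (hcen (BraidAux.phi n x)) k).eq]
      obtain ⟨j, hj⟩ := BraidAux.center_BM hN m hmc
      rw [hj, map_pow] at hm
      refine Subgroup.mem_zpowers_iff.2 ⟨(j : ℤ) - k, ?_⟩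
      rw [zpow_sub, zpow_natCast, zpow_natCast, ← hm]
      simp
    · rw [Subgroup.zpowers_le, Subgroup.mem_center_iff]
      intro g
      exact (hcen g).eq.symm
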